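/- Suppose f : ℝ → ℝ is measurable and satisfies ∫_ℝ |f(x)|^p dx ≤ exp(h*(p)) for every p ≥ α, and suppose moreover that ∑_{k=3}^∞ exp(h(k) − h(k+1)) < ∞. Then ∫_ℝ N(e^{−2}·|f(x)|) dx < ∞. -/

import Mathlib

open Real Set MeasureTheory

/-!
Write `z = e⁻²|f|`. Where `z` is bounded, `N z` is at most a constant times `|f| ^ α`, which is
integrable by the moment bound at `p = α`. The rest is cut into the shells `m + 2 ≤ log z < m + 3`
with `m` large: there `N z = exp (h (log z)) ≤ exp (h (m + 3))`, while `|f| ≥ exp (m + 4)`.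

By Chebyshev, `|{|f| ≥ exp y}| ≤ exp (h* p - p y)` for each `p ≥ α` (`volume_exp_le_abs_le`).
Taking for `p` a subgradient of the convex function `h` at `y` (`exists_subgradient`) gives
`h* p = p y - h y`, so the measure is at most `exp (-h y)`. The superlinear growth of `h` ensures
`p ≥ α` once `y` is large, since `p ≥ (h y - h 0) / y`. Hence the shells contribute at most
`∑ exp (h (m + 3) - h (m + 4))`, a tail of the series assumed to converge.
-/

/-- A convex function on `[0, ∞)` has an affine support line at each `y > 0`. -/
lemma exists_subgradient {h : ℝ → ℝ} (hconv : ConvexOn ℝ (Ici 0) h) {y : ℝ} (hy : 0 < y) :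
    ∃ p : ℝ, ∀ t ≥ (0 : ℝ), h y + p * (t - y) ≤ h t := by
  have hyi : y ∈ interior (Ici (0 : ℝ)) := by simpa using hy
  refine ⟨derivWithin h (Ioi y) y, fun t ht => ?_⟩
  rcases lt_trichotomy t y with hty | rfl | hty
  · have h1 := (hconv.slope_le_leftDeriv_of_mem_interior ht hyi hty).trans
      (hconv.leftDeriv_le_rightDeriv_of_mem_interior hyi)
    rw [slope_def_field, div_le_iff₀ (sub_pos.2 hty)] at h1
    linarith
  · simp
  · have h1 := hconv.rightDeriv_le_slope_of_mem_interior hyi (mem_Ici.2 ht) hty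
    rw [slope_def_field, le_div_iff₀ (sub_pos.2 hty)] at h1
    linarith

/-- Chebyshev's inequality at exponent `p`, with the level and the bounds in exponential form. -/
lemma volume_exp_le_abs_le {f : ℝ → ℝ} (hf : Measurable f) {p s y H : ℝ} (hp : 0 ≤ p)
    (hfp : (∫⁻ x : ℝ, (‖f x‖₊ : ENNReal) ^ p) ≤ ENNReal.ofReal (exp s))
    (hs : s ≤ p * y - H) :
    volume {x | exp y ≤ |f x|} ≤ ENNReal.ofReal (exp (-H)) := by
  have hε : ENNReal.ofReal (exp (p * y)) ≠ 0 := by simp [exp_pos]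
  have hmeas : Measurable fun x => (‖f x‖₊ : ENNReal) ^ p := by fun_prop
  calc volume {x | exp y ≤ |f x|}
      ≤ volume {x | ENNReal.ofReal (exp (p * y)) ≤ (‖f x‖₊ : ENNReal) ^ p} := by
        refine measure_mono fun x hx => ?_
        have hx' : ENNReal.ofReal (exp y) ≤ (‖f x‖₊ : ENNReal) := by
          rw [← enorm_eq_nnnorm, ← ofReal_norm, Real.norm_eq_abs]
          exact ENNReal.ofReal_le_ofReal hx
        have := ENNReal.rpow_le_rpow hx' hp
        rwa [ENNReal.ofReal_rpow_of_nonneg (exp_pos _).le hp, ← Real.exp_mul, mul_comm] at this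
    _ ≤ (∫⁻ x : ℝ, (‖f x‖₊ : ENNReal) ^ p) / ENNReal.ofReal (exp (p * y)) :=
        meas_ge_le_lintegral_div hmeas.aemeasurable hε ENNReal.ofReal_ne_top
    _ ≤ ENNReal.ofReal (exp s) / ENNReal.ofReal (exp (p * y)) := by gcongr
    _ = ENNReal.ofReal (exp (s - p * y)) := by
        rw [← ENNReal.ofReal_div_of_pos (exp_pos _), ← Real.exp_sub]
    _ ≤ ENNReal.ofReal (exp (-H)) :=
        ENNReal.ofReal_le_ofReal (exp_le_exp.2 (by linarith))

/-- For large `y` the subgradient at `y` is an admissible exponent, so Chebyshev's inequality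
gives the sharp tail bound. -/
lemma exists_volume_tail_le {α : ℝ} (hα : 1 ≤ α) {h hstar : ℝ → ℝ}
    (hconv : ConvexOn ℝ (Set.Ici 0) h)
    (hsuper : Filter.Tendsto (fun y => h y / y) Filter.atTop Filter.atTop)
    (hstar_def : ∀ p ≥ α, IsLUB {r : ℝ | ∃ y ≥ (0 : ℝ), r = p * y - h y} (hstar p))
    {f : ℝ → ℝ} (hf : Measurable f)
    (hfp : ∀ p ≥ α, (∫⁻ x : ℝ, (‖f x‖₊ : ENNReal) ^ p) ≤ ENNReal.ofReal (Real.exp (hstar p))) :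
    ∃ Y : ℝ, ∀ y ≥ Y, volume {x | exp y ≤ |f x|} ≤ ENNReal.ofReal (exp (-h y)) := by
  obtain ⟨Y, hY⟩ := Filter.eventually_atTop.1 (hsuper.eventually_ge_atTop (α + |h 0|))
  refine ⟨max Y 1, fun y hy => ?_⟩
  have hy1 : 1 ≤ y := (le_max_right _ _).trans hy
  have hslope := hY y ((le_max_left _ _).trans hy)
  rw [le_div_iff₀ (by linarith)] at hslope
  obtain ⟨p, hp⟩ := exists_subgradient hconv (y := y) (by linarith)
  have hpα : α ≤ p := by
    have h0 := hp 0 le_rfl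
    have : α * y ≤ p * y := by nlinarith [le_abs_self (h 0), abs_nonneg (h 0)]
    exact le_of_mul_le_mul_right this (by linarith)
  refine volume_exp_le_abs_le hf (by linarith) (hfp p hpα) ((hstar_def p hpα).2 ?_)
  rintro r ⟨t, ht, rfl⟩
  linarith [hp t ht]

/-- Suppose `f : ℝ → ℝ` is measurable and satisfies
`∫_ℝ |f(x)|^p dx ≤ exp(h*(p))` for every `p ≥ α`, and suppose moreover that
`∑_{k=3}^∞ exp(h(k) − h(k+1)) < ∞`. Then `∫_ℝ N(e^{−2}·|f(x)|) dx < ∞`. -/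
theorem stmt_3
    (α : ℝ) (hα : 1 ≤ α)
    (φ h hstar : ℝ → ℝ)
    (hh : ∀ y ≥ (0 : ℝ), h y = φ (Real.exp y))
    (hφcont : ContinuousOn φ (Set.Ici 1))
    (hmono : StrictMonoOn h (Set.Ici 0))
    (hconv : ConvexOn ℝ (Set.Ici 0) h)
    (hsuper : Filter.Tendsto (fun y => h y / y) Filter.atTop Filter.atTop)
    (hstar_def : ∀ p ≥ α, IsLUB {r : ℝ | ∃ y ≥ (0 : ℝ), r = p * y - h y} (hstar p))
    (z₀ : ℝ) (hz₀ : 1 ≤ z₀)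
    (N : ℝ → ℝ)
    (hN₁ : ∀ z ∈ Set.Icc (0 : ℝ) z₀, N z = Real.exp (φ z₀) * (z / z₀) ^ α)
    (hN₂ : ∀ z, z₀ < z → N z = Real.exp (φ z))
    (f : ℝ → ℝ) (hf : Measurable f)
    (hfp : ∀ p ≥ α, (∫⁻ x : ℝ, (‖f x‖₊ : ENNReal) ^ p) ≤ ENNReal.ofReal (Real.exp (hstar p)))
    (hsum : Summable (fun k : ℕ => Real.exp (h (k + 3) - h (k + 4)))) :
    (∫⁻ x : ℝ, ENNReal.ofReal (N (Real.exp (-2) * |f x|))) < ⊤ := by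

  obtain ⟨Y, hY⟩ := exists_volume_tail_le hα hconv hsuper hstar_def hf hfp
  obtain ⟨M, hM⟩ := exists_nat_ge Y
  have hφmono : ∀ a b : ℝ, 1 ≤ a → a ≤ b → φ a ≤ φ b := by
    intro a b ha hab
    have ha0 : 0 < a := by linarith
    have := hmono.monotoneOn (mem_Ici.2 (log_nonneg ha))
      (mem_Ici.2 (log_nonneg (ha.trans hab))) (log_le_log ha0 hab)
    rwa [hh _ (log_nonneg ha), hh _ (log_nonneg (ha.trans hab)), exp_log ha0,
      exp_log (ha0.trans_le hab)] at this
  -- `B` separates the bounded range of `z` from the shells with `m ≥ M`.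
  set B : ℝ := max z₀ (exp (M + 2)) with hB
  set A : ℕ → Set ℝ := fun j => {x | exp ((j + M : ℕ) + 4) ≤ |f x|} with hA
  have hAm : ∀ j, MeasurableSet (A j) := fun j => measurableSet_le measurable_const hf.abs
  have hpt : ∀ x, ENNReal.ofReal (N (exp (-2) * |f x|)) ≤
      ENNReal.ofReal (exp (φ B)) * (‖f x‖₊ : ENNReal) ^ α +
        ∑' j : ℕ, (A j).indicator
          (fun _ => ENNReal.ofReal (exp (h ((j + M : ℕ) + 3)))) x := by
    intro x
    set z := exp (-2) * |f x| with hz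
    have hz0 : 0 ≤ z := by positivity
    by_cases hzB : z ≤ B
    · refine le_add_right ?_
      have hzf : z ≤ |f x| := mul_le_of_le_one_left (abs_nonneg _) (exp_le_one_iff.2 (by norm_num))
      have hNz : N z ≤ exp (φ B) * |f x| ^ α := by
        rcases le_or_gt z z₀ with hzz | hzz
        · rw [hN₁ z ⟨hz0, hzz⟩]
          have h1 : z / z₀ ≤ |f x| := (div_le_self hz0 hz₀).trans hzf
          have h2 := hφmono z₀ B hz₀ (le_max_left _ _)
          gcongr
        · rw [hN₂ z hzz]
          have h1 : (1 : ℝ) ≤ |f x| ^ α := one_le_rpow (by linarith) (by linarith)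
          have h2 := exp_le_exp.2 (hφmono z B (by linarith) hzB)
          nlinarith [exp_pos (φ B)]
      calc ENNReal.ofReal (N z) ≤ ENNReal.ofReal (exp (φ B) * |f x| ^ α) :=
            ENNReal.ofReal_le_ofReal hNz
        _ = _ := by
            rw [ENNReal.ofReal_mul (exp_pos _).le,
              ← ENNReal.ofReal_rpow_of_nonneg (abs_nonneg _) (by linarith),
              ← enorm_eq_nnnorm, ← ofReal_norm, Real.norm_eq_abs]
    · refine le_add_left ?_
      push Not at hzB
      have hzz : z₀ < z := (le_max_left _ _).trans_lt hzB
      have hzpos : 0 < z := by linarith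
      have hlog : (M : ℝ) + 2 < log z :=
        (lt_log_iff_exp_lt hzpos).2 ((le_max_right _ _).trans_lt hzB)
      have hlog0 : 0 ≤ log z := by linarith [(Nat.cast_nonneg M : (0 : ℝ) ≤ M)]
      have hfloor1 := Nat.floor_le hlog0
      have hfloor2 := Nat.lt_floor_add_one (log z)
      have hge : M + 2 ≤ ⌊log z⌋₊ := Nat.le_floor (by push_cast; exact hlog.le)
      obtain ⟨j, hj⟩ := Nat.exists_eq_add_of_le hge
      have hjr : (⌊log z⌋₊ : ℝ) = ((j + M : ℕ) : ℝ) + 2 := by rw [hj]; push_cast; ring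
      rw [hjr] at hfloor1 hfloor2
      refine le_trans ?_ (ENNReal.le_tsum j)
      have hxA : x ∈ A j := by
        have h1 := (le_log_iff_exp_le hzpos).1 hfloor1
        have h2 : |f x| = exp 2 * z := by
          rw [hz, ← mul_assoc, ← Real.exp_add]; simp
        change exp _ ≤ |f x|
        rw [h2, show ((j + M : ℕ) : ℝ) + 4 = 2 + (((j + M : ℕ) : ℝ) + 2) by ring, Real.exp_add]
        gcongr
      rw [indicator_of_mem hxA, hN₂ z hzz]
      refine ENNReal.ofReal_le_ofReal (exp_le_exp.2 ?_)
      have := hh (log z) hlog0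
      rw [exp_log hzpos] at this
      rw [← this]
      exact hmono.monotoneOn (mem_Ici.2 hlog0) (mem_Ici.2 (by linarith)) (by linarith)
  refine (lintegral_mono hpt).trans_lt ?_
  have hmeas : Measurable fun x => (‖f x‖₊ : ENNReal) ^ α := by fun_prop
  rw [lintegral_add_left (hmeas.const_mul _), lintegral_const_mul _ hmeas,
    lintegral_tsum fun j => (measurable_const.indicator (hAm j)).aemeasurable]
  refine ENNReal.add_lt_top.2 ⟨ENNReal.mul_lt_top ENNReal.ofReal_lt_top
    ((hfp α le_rfl).trans_lt ENNReal.ofReal_lt_top), ?_⟩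
  have hsumM := (summable_nat_add_iff M).2 hsum
  refine lt_of_le_of_lt (ENNReal.tsum_le_tsum fun j => ?_)
    (lt_top_iff_ne_top.2 hsumM.tsum_ofReal_ne_top)
  rw [lintegral_indicator_const (hAm j), sub_eq_add_neg, Real.exp_add,
    ENNReal.ofReal_mul (exp_pos _).le]
  gcongr
  refine hY _ ?_
  push_cast
  linarith [(Nat.cast_nonneg j : (0 : ℝ) ≤ j)]
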